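/- (Ecker–Huisken local gradient estimate, graphical form; Theorem 2.1 / Theorem "localgradthm".) Let n ≥ 1, ρ > 0, t₁ ∈ ℝ, t₂ > t₁, x̂₀ ∈ ℝⁿ, and let f : [t₁,t₂) × Bⁿ(x̂₀,ρ) → ℝ be a graphical mean curvature flow. Define v(t,x) := √(1+|Df(t,x)|²). Then for every c ∈ ℝ, every t ∈ [t₁,t₂) and every x ∈ Bⁿ(x̂₀,ρ) with |x−x̂₀|² + (f(t,x)−c)² + 2n(t−t₁) < ρ², one has v(t,x)·(1 − ρ⁻²(|x−x̂₀|² + (f(t,x)−c)² + 2n(t−t₁))) ≤ sup_{y ∈ Bⁿ(x̂₀,ρ)} v(t₁,y). -/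

import Mathlib

open Metric Set MeasureTheory


/-- Partial derivative `∂ᵢ g (x)`. -/
noncomputable def pd {n : ℕ} (g : EuclideanSpace ℝ (Fin n) → ℝ) (x : EuclideanSpace ℝ (Fin n))
    (i : Fin n) : ℝ :=
  fderiv ℝ g x (EuclideanSpace.single i 1)

/-- Second partial derivative `∂ᵢ∂ⱼ g (x)`. -/
noncomputable def pd2 {n : ℕ} (g : EuclideanSpace ℝ (Fin n) → ℝ) (x : EuclideanSpace ℝ (Fin n))
    (i j : Fin n) : ℝ :=
  fderiv ℝ (fun y => pd g y j) x (EuclideanSpace.single i 1)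

/-- Squared Euclidean norm `|Dg(x)|²` of the spatial gradient. -/
noncomputable def gradNormSq {n : ℕ} (g : EuclideanSpace ℝ (Fin n) → ℝ)
    (x : EuclideanSpace ℝ (Fin n)) : ℝ :=
  ∑ i, (pd g x i) ^ 2

/-- Euclidean norm `|Dg(x)|` of the spatial gradient. -/
noncomputable def gradNorm {n : ℕ} (g : EuclideanSpace ℝ (Fin n) → ℝ)
    (x : EuclideanSpace ℝ (Fin n)) : ℝ :=
  Real.sqrt (gradNormSq g x)

/-- Frobenius norm `|D²g(x)|` of the spatial Hessian. -/
noncomputable def hessNorm {n : ℕ} (g : EuclideanSpace ℝ (Fin n) → ℝ)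
    (x : EuclideanSpace ℝ (Fin n)) : ℝ :=
  Real.sqrt (∑ i, ∑ j, (pd2 g x i j) ^ 2)

/-- Right-hand side of the graphical mean curvature flow equation:
`∑ᵢⱼ (δᵢⱼ − ∂ᵢg ∂ⱼg / (1+|Dg|²)) ∂ᵢ∂ⱼ g`. -/
noncomputable def mcfRHS {n : ℕ} (g : EuclideanSpace ℝ (Fin n) → ℝ)
    (x : EuclideanSpace ℝ (Fin n)) : ℝ :=
  ∑ i, ∑ j,
    ((if i = j then (1 : ℝ) else 0) - pd g x i * pd g x j / (1 + gradNormSq g x)) * pd2 g x i j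

/-- `f` is a (smooth) graphical mean curvature flow on `I × U`. -/
def IsGMCF {n : ℕ} (I : Set ℝ) (U : Set (EuclideanSpace ℝ (Fin n)))
    (f : ℝ → EuclideanSpace ℝ (Fin n) → ℝ) : Prop :=
  ContDiffOn ℝ (⊤ : ℕ∞) (fun p : ℝ × EuclideanSpace ℝ (Fin n) => f p.1 p.2) (I ×ˢ U) ∧
  ∀ t ∈ I, ∀ x ∈ U, deriv (fun s => f s x) t = mcfRHS (f t) x

/-- Squared norm `|A|²(g,x)` of the second fundamental form of the graph of `g`
at `(x, g(x))`. -/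
noncomputable def secondFF2 {n : ℕ} (g : EuclideanSpace ℝ (Fin n) → ℝ)
    (x : EuclideanSpace ℝ (Fin n)) : ℝ :=
  ∑ i, ∑ j, ∑ k, ∑ l,
    ((if i = k then (1 : ℝ) else 0) - pd g x i * pd g x k / (1 + gradNormSq g x)) *
      ((if j = l then (1 : ℝ) else 0) - pd g x j * pd g x l / (1 + gradNormSq g x)) *
      (pd2 g x i j / Real.sqrt (1 + gradNormSq g x)) *
      (pd2 g x k l / Real.sqrt (1 + gradNormSq g x))

/-! Write `V = 1 + |Df|²`, let `a = 1 - V⁻¹ Df Dfᵀ` be the inverse of the induced metric and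
`L = ∂ₜ - ∑ aᵢⱼ ∂ᵢ∂ⱼ`, so that the flow equation is `L f = 0`. Differentiating this equation in the
direction `eₗ` gives `L (∂ₗf) = -V⁻¹ ⟨∇∂ₗf, a ∇V⟩`, hence
`L V = -V⁻¹ ⟨∇V, a ∇V⟩ - 2 ∑ₗ ⟨∇∂ₗf, a ∇∂ₗf⟩`; since `∇V = 2 ∑ₗ ∂ₗf ∇∂ₗf`, Cauchy–Schwarz yields
`L V ≤ -(3/2) V⁻¹ ⟨∇V, a ∇V⟩`.

On the other hand `tr a + ⟨Df, a Df⟩ = n`, so `φ = R - (|x - x₀|² + (f - c)² + 2n (t - t₁))` solves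
`L φ = 0`. At a spatial maximum of `V φ²` one has `∇V = -2 V φ⁻¹ ∇φ`, and with the constant `3/2`
all gradient terms of `L (V φ²)` cancel: `V φ²` cannot grow. For `R < ρ²` the set `{φ ≥ 0}` is
compact in the cylinder over `Bⁿ(x₀, ρ)`, so the maximum principle applies there; then `R → ρ²`. -/

open Filter Matrix
open scoped Topology ContDiff

section LinearAlgebra

variable {ι κ : Type*} [Fintype ι]

theorem trace_mul_vecMulVec (a : Matrix ι ι ℝ) (x y : ι → ℝ) :
    (a * vecMulVec x y).trace = y ⬝ᵥ a *ᵥ x := by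
  rw [mul_vecMulVec, trace_vecMulVec, dotProduct_comm]

theorem trace_mul_nonpos_of_posSemidef {a H : Matrix ι ι ℝ} (ha : a.PosSemidef)
    (hH : ∀ x, x ⬝ᵥ H *ᵥ x ≤ 0) : (a * H).trace ≤ 0 := by
  obtain ⟨m, v, rfl⟩ := posSemidef_iff_eq_sum_vecMulVec.1 ha
  rw [Finset.sum_mul, trace_sum]
  refine Finset.sum_nonpos fun k _ => ?_
  rw [trace_mul_comm, star_trivial, trace_mul_vecMulVec]
  exact hH (v k)

theorem dotProduct_mulVec_sum_smul_le [Fintype κ] {a : Matrix ι ι ℝ} (ha : a.PosSemidef)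
    (p : κ → ℝ) (x : κ → ι → ℝ) :
    (∑ l, p l • x l) ⬝ᵥ a *ᵥ (∑ l, p l • x l) ≤ (p ⬝ᵥ p) * ∑ l, x l ⬝ᵥ a *ᵥ x l := by
  obtain ⟨m, v, rfl⟩ := posSemidef_iff_eq_sum_vecMulVec.1 ha
  have quadratic (y : ι → ℝ) :
      y ⬝ᵥ (∑ k, vecMulVec (v k) (star (v k))) *ᵥ y = ∑ k, (v k ⬝ᵥ y) ^ 2 := by
    simp only [sum_mulVec, vecMulVec_mulVec, star_trivial, op_smul_eq_smul,
      dotProduct_comm y, sum_dotProduct, smul_dotProduct, smul_eq_mul, sq]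
  simp only [quadratic, dotProduct_sum, dotProduct_smul, smul_eq_mul]
  rw [Finset.sum_comm, Finset.mul_sum]
  refine Finset.sum_le_sum fun k _ => ?_
  simpa only [dotProduct, sq] using Finset.sum_mul_sq_le_sq_mul_sq Finset.univ p fun l => v k ⬝ᵥ x l

/-- `1 + |p|²`, the determinant of the metric induced on a graph with gradient `p`. -/
def metricDet (p : ι → ℝ) : ℝ := 1 + p ⬝ᵥ p

theorem metricDet_pos (p : ι → ℝ) : 0 < metricDet p :=
  add_pos_of_pos_of_nonneg one_pos (dotProduct_self_star_nonneg p)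

variable [DecidableEq ι]

/-- The inverse `1 - (1 + |p|²)⁻¹ p pᵀ` of the metric `1 + p pᵀ` induced on a graph with
gradient `p`. -/
noncomputable def invMetric (p : ι → ℝ) : Matrix ι ι ℝ := 1 - (metricDet p)⁻¹ • vecMulVec p p

theorem dotProduct_invMetric_mulVec (p x y : ι → ℝ) :
    x ⬝ᵥ invMetric p *ᵥ y = x ⬝ᵥ y - (metricDet p)⁻¹ * (x ⬝ᵥ p) * (p ⬝ᵥ y) := by
  simp only [invMetric, sub_mulVec, one_mulVec, smul_mulVec, vecMulVec_mulVec, op_smul_eq_smul,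
    dotProduct_sub, dotProduct_smul, smul_eq_mul]
  ring

theorem invMetric_isSymm (p : ι → ℝ) : (invMetric p).IsSymm := by
  simp [invMetric, IsSymm, transpose_vecMulVec]

theorem posSemidef_invMetric (p : ι → ℝ) : (invMetric p).PosSemidef := by
  refine .of_dotProduct_mulVec_nonneg (invMetric_isSymm p) fun x => ?_
  have cauchy_schwarz : (x ⬝ᵥ p) ^ 2 ≤ (x ⬝ᵥ x) * (p ⬝ᵥ p) := by
    simpa only [dotProduct, sq] using Finset.sum_mul_sq_le_sq_mul_sq Finset.univ x p
  have x_sq_nonneg : 0 ≤ x ⬝ᵥ x := dotProduct_self_star_nonneg x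
  rw [star_trivial, dotProduct_invMetric_mulVec, dotProduct_comm p x, sub_nonneg, mul_assoc,
    inv_mul_le_iff₀ (metricDet_pos p), ← sq]
  exact cauchy_schwarz.trans (by rw [metricDet]; linarith)

theorem trace_invMetric_add (p : ι → ℝ) :
    (invMetric p).trace + p ⬝ᵥ invMetric p *ᵥ p = Fintype.card ι := by
  have := (metricDet_pos p).ne'
  rw [dotProduct_invMetric_mulVec, invMetric, trace_sub, trace_one, trace_smul, trace_vecMulVec,
    smul_eq_mul]
  field_simp
  rw [metricDet]
  ring

end LinearAlgebra

section DirectionalDerivatives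

variable {X ι : Type*} [NormedAddCommGroup X] [NormedSpace ℝ X] {F G : X → ℝ} {q : X}

/-- The derivative of `G` in the constant direction `u`, as an operator on functions so that it
can be iterated. -/
noncomputable def dirDeriv (u : X) (G : X → ℝ) (q : X) : ℝ := fderiv ℝ G q u

theorem dirDeriv_congr (h : F =ᶠ[𝓝 q] G) (u : X) : dirDeriv u F q = dirDeriv u G q := by
  rw [dirDeriv, dirDeriv, h.fderiv_eq]

theorem dirDeriv_add (hF : DifferentiableAt ℝ F q) (hG : DifferentiableAt ℝ G q) (u : X) :
    dirDeriv u (fun z => F z + G z) q = dirDeriv u F q + dirDeriv u G q := by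
  simp [dirDeriv, fderiv_fun_add hF hG]

theorem dirDeriv_mul (hF : DifferentiableAt ℝ F q) (hG : DifferentiableAt ℝ G q) (u : X) :
    dirDeriv u (fun z => F z * G z) q = F q * dirDeriv u G q + G q * dirDeriv u F q := by
  simp [dirDeriv, fderiv_fun_mul hF hG]

theorem dirDeriv_sum {G : ι → X → ℝ} {s : Finset ι} (hG : ∀ i ∈ s, DifferentiableAt ℝ (G i) q)
    (u : X) : dirDeriv u (fun z => ∑ i ∈ s, G i z) q = ∑ i ∈ s, dirDeriv u (G i) q := by
  simp [dirDeriv, fderiv_fun_sum hG]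

theorem dirDeriv_inv (hG : DifferentiableAt ℝ G q) (h₀ : G q ≠ 0) (u : X) :
    dirDeriv u (fun z => (G z)⁻¹) q = -dirDeriv u G q / G q ^ 2 := by
  have := (hasDerivAt_inv h₀).comp_hasFDerivAt q hG.hasFDerivAt
  rw [dirDeriv, HasFDerivAt.fderiv (f := fun z => (G z)⁻¹) this]
  simp [dirDeriv]
  ring

theorem dirDeriv_neg (G : X → ℝ) (u : X) :
    dirDeriv u (fun z => -G z) = fun z => -dirDeriv u G z := by
  ext z
  simp [dirDeriv]

theorem dirDeriv_const_add (C : ℝ) (G : X → ℝ) (u : X) :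
    dirDeriv u (fun z => C + G z) = dirDeriv u G := by
  ext z
  simp [dirDeriv]

theorem dirDeriv_sub_const (C : ℝ) (G : X → ℝ) (u : X) :
    dirDeriv u (fun z => G z - C) = dirDeriv u G := by
  ext z
  simp [dirDeriv, fderiv_sub_const]

theorem dirDeriv_const_sub (C : ℝ) (G : X → ℝ) (u : X) :
    dirDeriv u (fun z => C - G z) = fun z => -dirDeriv u G z := by
  ext z
  simp [dirDeriv, fderiv_const_sub]

theorem dirDeriv_sum_smul [Fintype ι] (e : ι → X) (x : ι → ℝ) (G : X → ℝ) (q : X) :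
    dirDeriv (∑ i, x i • e i) G q = ∑ i, x i * dirDeriv (e i) G q := by
  simp [dirDeriv]

theorem contDiffAt_dirDeriv {m n : WithTop ℕ∞} (hG : ContDiffAt ℝ n G q) (hmn : m + 1 ≤ n) (u : X) :
    ContDiffAt ℝ m (dirDeriv u G) q :=
  (hG.fderiv_right hmn).clm_apply contDiffAt_const

theorem dirDeriv_dirDeriv (hG : ContDiffAt ℝ 2 G q) (u w : X) :
    dirDeriv u (dirDeriv w G) q = fderiv ℝ (fderiv ℝ G) q u w := by
  have h := ((hG.fderiv_right (m := 1) (by norm_num)).differentiableAt one_ne_zero).hasFDerivAt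
  have : HasFDerivAt (dirDeriv w G) _ q := h.clm_apply (hasFDerivAt_const w q)
  simp [dirDeriv, this.fderiv]

theorem dirDeriv_comm (hG : ContDiffAt ℝ 2 G q) (u w : X) :
    dirDeriv u (dirDeriv w G) q = dirDeriv w (dirDeriv u G) q := by
  rw [dirDeriv_dirDeriv hG, dirDeriv_dirDeriv hG]
  exact hG.isSymmSndFDerivAt (by simp) u w

theorem eventually_differentiableAt {n : WithTop ℕ∞} (hG : ContDiffAt ℝ n G q) (hn : n ≠ 0) :
    ∀ᶠ z in 𝓝 q, DifferentiableAt ℝ G z := by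
  have h1 : ContDiffAt ℝ 1 G q := hG.of_le (ENat.one_le_iff_ne_zero_withTop.2 hn)
  filter_upwards [h1.eventually (by simp)] with z hz using hz.differentiableAt one_ne_zero

theorem dirDeriv_dirDeriv_mul (hF : ContDiffAt ℝ 2 F q) (hG : ContDiffAt ℝ 2 G q) (u w : X) :
    dirDeriv u (dirDeriv w fun z => F z * G z) q =
      F q * dirDeriv u (dirDeriv w G) q + G q * dirDeriv u (dirDeriv w F) q
        + dirDeriv u F q * dirDeriv w G q + dirDeriv u G q * dirDeriv w F q := by
  have first_order : dirDeriv w (fun z => F z * G z) =ᶠ[𝓝 q]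
      fun z => F z * dirDeriv w G z + G z * dirDeriv w F z := by
    filter_upwards [eventually_differentiableAt hF two_ne_zero,
      eventually_differentiableAt hG two_ne_zero] with z hFz hGz using dirDeriv_mul hFz hGz w
  have hF₀ := hF.differentiableAt two_ne_zero
  have hG₀ := hG.differentiableAt two_ne_zero
  have hF₁ := (contDiffAt_dirDeriv (m := 1) hF (by norm_num) w).differentiableAt one_ne_zero
  have hG₁ := (contDiffAt_dirDeriv (m := 1) hG (by norm_num) w).differentiableAt one_ne_zero
  rw [dirDeriv_congr first_order, dirDeriv_add (hF₀.fun_mul hG₁) (hG₀.fun_mul hF₁),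
    dirDeriv_mul hF₀ hG₁, dirDeriv_mul hG₀ hF₁]
  ring

theorem dirDeriv_dirDeriv_sum {G : ι → X → ℝ} {s : Finset ι}
    (hG : ∀ i ∈ s, ContDiffAt ℝ 2 (G i) q) (u w : X) :
    dirDeriv u (dirDeriv w fun z => ∑ i ∈ s, G i z) q =
      ∑ i ∈ s, dirDeriv u (dirDeriv w (G i)) q := by
  have first_order : dirDeriv w (fun z => ∑ i ∈ s, G i z) =ᶠ[𝓝 q]
      fun z => ∑ i ∈ s, dirDeriv w (G i) z := by
    filter_upwards [(Finset.eventually_all s).2 fun i hi =>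
      eventually_differentiableAt (hG i hi) two_ne_zero] with z hz using dirDeriv_sum hz w
  rw [dirDeriv_congr first_order, dirDeriv_sum fun i hi =>
    (contDiffAt_dirDeriv (m := 1) (hG i hi) (by norm_num) w).differentiableAt one_ne_zero]

theorem hasDerivAt_comp_line {r : ℝ} {u : X} (hG : DifferentiableAt ℝ G (q + r • u)) :
    HasDerivAt (fun r : ℝ => G (q + r • u)) (dirDeriv u G (q + r • u)) r := by
  have line : HasDerivAt (fun r : ℝ => q + r • u) u r := by
    simpa using ((hasDerivAt_id r).smul_const u).const_add q
  exact hG.hasFDerivAt.comp_hasDerivAt r line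

theorem deriv_deriv_nonpos_of_isLocalMax {g : ℝ → ℝ} {x : ℝ} (hg : IsLocalMax g x)
    (hc : ContinuousAt g x) : deriv (deriv g) x ≤ 0 := by
  by_contra! hpos
  have hmin : IsLocalMin g x := isLocalMin_of_deriv_deriv_pos hpos hg.deriv_eq_zero hc
  have constant : g =ᶠ[𝓝 x] fun _ => g x := by
    filter_upwards [hg, hmin] with r hle hge using le_antisymm hle hge
  simp [constant.deriv.deriv_eq] at hpos

theorem dirDeriv_eq_zero_of_isLocalMax {u : X} (hG : DifferentiableAt ℝ G q)
    (hmax : IsLocalMax (fun r : ℝ => G (q + r • u)) 0) : dirDeriv u G q = 0 := by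
  simpa using hmax.hasDerivAt_eq_zero (hasDerivAt_comp_line (by simpa using hG))

theorem dirDeriv_dirDeriv_nonpos_of_isLocalMax {u : X} (hG : ContDiffAt ℝ 2 G q)
    (hmax : IsLocalMax (fun r : ℝ => G (q + r • u)) 0) : dirDeriv u (dirDeriv u G) q ≤ 0 := by
  have line : Tendsto (fun r : ℝ => q + r • u) (𝓝 0) (𝓝 q) :=
    Continuous.tendsto' (by fun_prop) _ _ (by simp)
  have first_deriv : deriv (fun r : ℝ => G (q + r • u)) =ᶠ[𝓝 0]
      fun r => dirDeriv u G (q + r • u) := by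
    filter_upwards [line.eventually (eventually_differentiableAt hG two_ne_zero)] with r hr
      using (hasDerivAt_comp_line hr).deriv
  have second_deriv : deriv (deriv fun r : ℝ => G (q + r • u)) 0 = dirDeriv u (dirDeriv u G) q := by
    have := (contDiffAt_dirDeriv (m := 1) hG (by norm_num) u).differentiableAt one_ne_zero
    rw [first_deriv.deriv_eq, (hasDerivAt_comp_line (by simpa using this)).deriv]
    simp
  rw [← second_deriv]
  exact deriv_deriv_nonpos_of_isLocalMax hmax
    (hasDerivAt_comp_line (by simpa using hG.differentiableAt two_ne_zero)).continuousAt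

end DirectionalDerivatives

section HeatOperator

variable {X ι κ : Type*} [NormedAddCommGroup X] [NormedSpace ℝ X]
  {F G W : X → ℝ} {q : X} {e : ι → X} {τ : X}

/-- The vector of derivatives of `G` in the directions `e i`. -/
noncomputable def partials (e : ι → X) (G : X → ℝ) (q : X) : ι → ℝ :=
  fun i => dirDeriv (e i) G q

/-- The matrix of second derivatives of `G` in the directions `e i`, whose rows are the
`partials` of the first derivatives. -/
noncomputable def hessMatrix (e : ι → X) (G : X → ℝ) (q : X) : Matrix ι ι ℝ :=
  of fun i => partials e (dirDeriv (e i) G) q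

theorem partials_mul (hF : DifferentiableAt ℝ F q) (hG : DifferentiableAt ℝ G q) (e : ι → X) :
    partials e (fun z => F z * G z) q = F q • partials e G q + G q • partials e F q := by
  ext i
  simp [partials, dirDeriv_mul hF hG]

theorem partials_sq (hG : DifferentiableAt ℝ G q) (e : ι → X) :
    partials e (fun z => G z ^ 2) q = (2 * G q) • partials e G q := by
  simp only [sq, partials_mul hG hG, ← add_smul, two_mul]

theorem partials_sub_const (C : ℝ) (G : X → ℝ) (e : ι → X) :
    partials e (fun z => G z - C) = partials e G := by
  simp only [funext_iff, partials, dirDeriv_sub_const, implies_true]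

theorem hessMatrix_isSymm (hG : ContDiffAt ℝ 2 G q) (e : ι → X) : (hessMatrix e G q).IsSymm :=
  IsSymm.ext fun _ _ => dirDeriv_comm hG _ _

theorem hessMatrix_mul (hF : ContDiffAt ℝ 2 F q) (hG : ContDiffAt ℝ 2 G q) (e : ι → X) :
    hessMatrix e (fun z => F z * G z) q =
      F q • hessMatrix e G q + G q • hessMatrix e F q
        + (vecMulVec (partials e F q) (partials e G q)
          + vecMulVec (partials e G q) (partials e F q)) := by
  ext i j
  simp only [hessMatrix, partials, of_apply, Matrix.add_apply, Matrix.smul_apply, smul_eq_mul,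
    vecMulVec_apply, dirDeriv_dirDeriv_mul hF hG]
  ring

theorem dirDeriv_hessMatrix (hG : ContDiffAt ℝ 3 G q) (e : ι → X) (u : X) (i j : ι) :
    dirDeriv u (fun z => hessMatrix e G z i j) q = hessMatrix e (dirDeriv u G) q i j := by
  have hG₂ : ContDiffAt ℝ 2 (dirDeriv (e i) G) q := contDiffAt_dirDeriv hG (by norm_num) _
  have commute_inner : dirDeriv u (dirDeriv (e i) G) =ᶠ[𝓝 q] dirDeriv (e i) (dirDeriv u G) := by
    filter_upwards [hG.eventually (by simp)] with z hz
      using dirDeriv_comm (hz.of_le (by norm_num)) _ _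
  exact (dirDeriv_comm hG₂ _ _).trans (dirDeriv_congr commute_inner _)

variable [Fintype ι]

theorem dotProduct_hessMatrix_mulVec (hG : ContDiffAt ℝ 2 G q) (e : ι → X) (x : ι → ℝ) :
    x ⬝ᵥ hessMatrix e G q *ᵥ x =
      dirDeriv (∑ i, x i • e i) (dirDeriv (∑ i, x i • e i) G) q := by
  rw [dirDeriv_sum_smul, dotProduct]
  refine Finset.sum_congr rfl fun i _ => ?_
  rw [dirDeriv_comm hG, dirDeriv_sum_smul, mulVec, dotProduct]
  simp only [hessMatrix, partials, of_apply, mul_comm]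

theorem dirDeriv_trace_mul {A B : X → Matrix ι ι ℝ}
    (hA : ∀ i j, DifferentiableAt ℝ (fun z => A z i j) q)
    (hB : ∀ i j, DifferentiableAt ℝ (fun z => B z i j) q) (u : X) :
    dirDeriv u (fun z => (A z * B z).trace) q =
      (A q * of fun i j => dirDeriv u (fun z => B z i j) q).trace
        + ((of fun i j => dirDeriv u (fun z => A z i j) q) * B q).trace := by
  simp only [trace, diag_apply, mul_apply, of_apply]
  rw [dirDeriv_sum fun i _ => .fun_sum fun j _ => (hA i j).fun_mul (hB j i),
    ← Finset.sum_add_distrib]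
  refine Finset.sum_congr rfl fun i _ => ?_
  rw [dirDeriv_sum fun j _ => (hA i j).fun_mul (hB j i), ← Finset.sum_add_distrib]
  refine Finset.sum_congr rfl fun j _ => ?_
  rw [dirDeriv_mul (hA i j) (hB j i), mul_comm (B q j i)]

/-- The operator `∂_τ - ∑ a i j ∂_{e i} ∂_{e j}` at the point `q`, with the coefficients `a`
frozen. -/
noncomputable def heatOp (τ : X) (e : ι → X) (a : Matrix ι ι ℝ) (G : X → ℝ) (q : X) : ℝ :=
  dirDeriv τ G q - (a * hessMatrix e G q).trace

variable {a : Matrix ι ι ℝ}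

/-- The quadratic form `∑ a i j ∂_{e i}F ∂_{e j}G` (carré du champ) measuring the failure of the
Leibniz rule for `heatOp τ e a`. -/
noncomputable def carreDuChamp (e : ι → X) (a : Matrix ι ι ℝ) (F G : X → ℝ) (q : X) : ℝ :=
  partials e F q ⬝ᵥ a *ᵥ partials e G q

theorem carreDuChamp_comm (ha : a.IsSymm) (e : ι → X) (F G : X → ℝ) (q : X) :
    carreDuChamp e a F G q = carreDuChamp e a G F q := by
  rw [carreDuChamp, dotProduct_mulVec, ← mulVec_transpose, ha.eq, dotProduct_comm, carreDuChamp]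

theorem heatOp_mul (ha : a.IsSymm) (hF : ContDiffAt ℝ 2 F q) (hG : ContDiffAt ℝ 2 G q) :
    heatOp τ e a (fun z => F z * G z) q =
      F q * heatOp τ e a G q + G q * heatOp τ e a F q - 2 * carreDuChamp e a F G q := by
  have symm := carreDuChamp_comm ha e F G q
  rw [carreDuChamp, carreDuChamp] at symm
  simp only [heatOp, hessMatrix_mul hF hG, dirDeriv_mul (hF.differentiableAt two_ne_zero)
    (hG.differentiableAt two_ne_zero), Matrix.mul_add, Matrix.mul_smul, trace_add, trace_smul,
    trace_mul_vecMulVec, carreDuChamp, symm, smul_eq_mul]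
  ring

theorem heatOp_sq (ha : a.IsSymm) (hG : ContDiffAt ℝ 2 G q) :
    heatOp τ e a (fun z => G z ^ 2) q =
      2 * G q * heatOp τ e a G q - 2 * carreDuChamp e a G G q := by
  simp only [sq, heatOp_mul ha hG hG]
  ring

theorem heatOp_sum {s : Finset κ} {G : κ → X → ℝ} (hG : ∀ k ∈ s, ContDiffAt ℝ 2 (G k) q) :
    heatOp τ e a (fun z => ∑ k ∈ s, G k z) q = ∑ k ∈ s, heatOp τ e a (G k) q := by
  have hess : hessMatrix e (fun z => ∑ k ∈ s, G k z) q = ∑ k ∈ s, hessMatrix e (G k) q := by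
    ext i j
    simp [hessMatrix, partials, dirDeriv_dirDeriv_sum hG, Matrix.sum_apply]
  rw [heatOp, hess, dirDeriv_sum fun k hk => (hG k hk).differentiableAt two_ne_zero,
    Finset.mul_sum, trace_sum, ← Finset.sum_sub_distrib]
  rfl

theorem heatOp_add (hF : ContDiffAt ℝ 2 F q) (hG : ContDiffAt ℝ 2 G q) :
    heatOp τ e a (fun z => F z + G z) q = heatOp τ e a F q + heatOp τ e a G q := by
  have := heatOp_sum (τ := τ) (e := e) (a := a) (s := Finset.univ) (G := ![F, G]) (q := q)
    (by simp [Fin.forall_fin_two, hF, hG])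
  simpa [Fin.sum_univ_two] using this

theorem heatOp_const_add (C : ℝ) (G : X → ℝ) (q : X) :
    heatOp τ e a (fun z => C + G z) q = heatOp τ e a G q := by
  simp only [heatOp, hessMatrix, dirDeriv_const_add]

theorem heatOp_const_sub (C : ℝ) (G : X → ℝ) (q : X) :
    heatOp τ e a (fun z => C - G z) q = -heatOp τ e a G q := by
  have hess : hessMatrix e (fun z => C - G z) q = -hessMatrix e G q := by
    ext i j
    simp [hessMatrix, partials, dirDeriv_const_sub, dirDeriv_neg]
  rw [heatOp, hess, dirDeriv_const_sub, Matrix.mul_neg, trace_neg, heatOp]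
  ring

theorem heatOp_sub_const (C : ℝ) (G : X → ℝ) (q : X) :
    heatOp τ e a (fun z => G z - C) q = heatOp τ e a G q := by
  simp only [heatOp, hessMatrix, dirDeriv_sub_const]

theorem heatOp_continuousLinearMap (L : X →L[ℝ] ℝ) (q : X) : heatOp τ e a L q = L τ := by
  have first_order (u : X) : dirDeriv u L = fun _ => L u := by
    ext z
    simp [dirDeriv]
  have second_order : hessMatrix e L q = 0 := by
    ext i j
    simp [hessMatrix, partials, first_order, dirDeriv]
  simp [heatOp, first_order, second_order]

theorem partials_eq_zero_of_isLocalMax (hW : DifferentiableAt ℝ W q)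
    (hmax : ∀ x : ι → ℝ, IsLocalMax (fun r : ℝ => W (q + r • ∑ i, x i • e i)) 0) :
    partials e W q = 0 := by
  have := dirDeriv_eq_zero_of_isLocalMax hW (hmax (partials e W q))
  rw [dirDeriv_sum_smul] at this
  exact dotProduct_self_eq_zero.1 this

theorem partials_eq_smul_of_isLocalMax_mul_sq (hF : DifferentiableAt ℝ F q)
    (hG : DifferentiableAt ℝ G q) (hG₀ : G q ≠ 0)
    (hmax : ∀ x : ι → ℝ, IsLocalMax (fun r : ℝ =>
      (fun z => F z * G z ^ 2) (q + r • ∑ i, x i • e i)) 0) :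
    partials e F q = (-2 * F q / G q) • partials e G q := by
  have critical := partials_eq_zero_of_isLocalMax (hF.fun_mul (hG.fun_pow 2)) hmax
  rw [partials_mul hF (hG.fun_pow 2), partials_sq hG] at critical
  ext i
  have := congrFun critical i
  simp only [Pi.add_apply, Pi.smul_apply, Pi.zero_apply, smul_eq_mul] at this ⊢
  field_simp
  refine mul_left_cancel₀ hG₀ ?_
  linarith

theorem dirDeriv_le_heatOp_of_isLocalMax (ha : a.PosSemidef) (hW : ContDiffAt ℝ 2 W q)
    (hmax : ∀ x : ι → ℝ, IsLocalMax (fun r : ℝ => W (q + r • ∑ i, x i • e i)) 0) :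
    dirDeriv τ W q ≤ heatOp τ e a W q := by
  refine (le_sub_self_iff _).2 (trace_mul_nonpos_of_posSemidef ha fun x => ?_)
  rw [dotProduct_hessMatrix_mulVec hW]
  exact dirDeriv_dirDeriv_nonpos_of_isLocalMax hW (hmax x)

end HeatOperator

section GraphicalFlow

variable {X ι : Type*} [NormedAddCommGroup X] [NormedSpace ℝ X]
  {F φ : X → ℝ} {q : X} {e : ι → X} {τ : X}

theorem differentiableAt_partials (hF : ContDiffAt ℝ 2 F q) (e : ι → X) (i : ι) :
    DifferentiableAt ℝ (fun z => partials e F z i) q :=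
  (contDiffAt_dirDeriv (m := 1) hF (by norm_num) (e i)).differentiableAt one_ne_zero

variable [Fintype ι]

/-- The determinant `1 + |DF|²` of the metric of the graph of `F`, as a function. -/
noncomputable def graphDet (e : ι → X) (F : X → ℝ) (q : X) : ℝ := metricDet (partials e F q)

theorem graphDet_pos (e : ι → X) (F : X → ℝ) (q : X) : 0 < graphDet e F q := metricDet_pos _

theorem contDiffAt_graphDet {m n : WithTop ℕ∞} (hF : ContDiffAt ℝ n F q)
    (hmn : m + 1 ≤ n) (e : ι → X) : ContDiffAt ℝ m (graphDet e F) q :=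
  contDiffAt_const.add (ContDiffAt.sum fun i _ =>
    (contDiffAt_dirDeriv hF hmn (e i)).mul (contDiffAt_dirDeriv hF hmn (e i)))

theorem dirDeriv_graphDet (hF : ContDiffAt ℝ 2 F q) (u : X) :
    dirDeriv u (graphDet e F) q = 2 * (partials e F q ⬝ᵥ partials e (dirDeriv u F) q) := by
  have hp := differentiableAt_partials hF e
  change dirDeriv u (fun z => 1 + ∑ i, partials e F z i * partials e F z i) q = _
  rw [dirDeriv_const_add, dirDeriv_sum fun i _ => (hp i).fun_mul (hp i), dotProduct, Finset.mul_sum]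
  refine Finset.sum_congr rfl fun i _ => ?_
  rw [dirDeriv_mul (hp i) (hp i)]
  simp only [partials, dirDeriv_comm hF (e i) u]
  ring

theorem partials_graphDet_eq_mulVec (hF : ContDiffAt ℝ 2 F q) (e : ι → X) :
    partials e (graphDet e F) q = (2 : ℝ) • hessMatrix e F q *ᵥ partials e F q := by
  ext i
  rw [partials, dirDeriv_graphDet hF, dotProduct_comm]
  rfl

theorem partials_graphDet_eq_sum (hF : ContDiffAt ℝ 2 F q) (e : ι → X) :
    partials e (graphDet e F) q =
      (2 : ℝ) • ∑ l, partials e F q l • partials e (dirDeriv (e l) F) q := by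
  ext i
  rw [partials_graphDet_eq_mulVec hF, ← (hessMatrix_isSymm hF e).eq, mulVec_transpose]
  simp [vecMul, dotProduct, hessMatrix, Finset.sum_apply]

variable [DecidableEq ι]

/-- The inverse metric of the graph of `F`, whose coefficients define its heat operator. -/
noncomputable def graphInvMetric (e : ι → X) (F : X → ℝ) (q : X) : Matrix ι ι ℝ :=
  invMetric (partials e F q)

theorem graphInvMetric_isSymm (e : ι → X) (F : X → ℝ) (q : X) : (graphInvMetric e F q).IsSymm :=
  invMetric_isSymm _

theorem posSemidef_graphInvMetric (e : ι → X) (F : X → ℝ) (q : X) :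
    (graphInvMetric e F q).PosSemidef :=
  posSemidef_invMetric _

theorem dirDeriv_graphInvMetric (hF : ContDiffAt ℝ 2 F q) (e : ι → X) (u : X) :
    (of fun i j => dirDeriv u (fun z => graphInvMetric e F z i j) q) =
      (2 * (graphDet e F q)⁻¹ ^ 2 * (partials e F q ⬝ᵥ partials e (dirDeriv u F) q)) •
        vecMulVec (partials e F q) (partials e F q)
      - (graphDet e F q)⁻¹ •
        (vecMulVec (partials e (dirDeriv u F) q) (partials e F q)
          + vecMulVec (partials e F q) (partials e (dirDeriv u F) q)) := by
  have hp := differentiableAt_partials hF e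
  have hV : DifferentiableAt ℝ (graphDet e F) q :=
    (contDiffAt_graphDet (m := 1) hF (by norm_num) e).differentiableAt one_ne_zero
  have hV₀ := (graphDet_pos e F q).ne'
  have dirDeriv_partials (i : ι) :
      dirDeriv u (fun z => partials e F z i) q = partials e (dirDeriv u F) q i :=
    dirDeriv_comm hF u (e i)
  ext i j
  simp only [of_apply, Matrix.add_apply, Matrix.sub_apply, Matrix.smul_apply, smul_eq_mul,
    vecMulVec_apply]
  change dirDeriv u (fun z => (1 : Matrix ι ι ℝ) i j
    - (graphDet e F z)⁻¹ * (partials e F z i * partials e F z j)) q = _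
  simp only [dirDeriv_const_sub]
  rw [dirDeriv_mul (hV.fun_inv hV₀) ((hp i).fun_mul (hp j)), dirDeriv_mul (hp i) (hp j),
    dirDeriv_inv hV hV₀, dirDeriv_graphDet hF, dirDeriv_partials, dirDeriv_partials]
  field_simp
  ring

theorem differentiableAt_graphInvMetric (hF : ContDiffAt ℝ 2 F q) (e : ι → X) (i j : ι) :
    DifferentiableAt ℝ (fun z => graphInvMetric e F z i j) q := by
  have hV := (contDiffAt_graphDet (m := 1) hF (by norm_num) e).differentiableAt
    one_ne_zero
  exact ((hV.fun_inv (graphDet_pos _ _ _).ne').fun_mul ((differentiableAt_partials hF e i).fun_mul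
    (differentiableAt_partials hF e j))).const_sub _

theorem trace_dirDeriv_graphInvMetric_mul_hessMatrix (hF : ContDiffAt ℝ 2 F q) (e : ι → X)
    (u : X) :
    ((of fun i j => dirDeriv u (fun z => graphInvMetric e F z i j) q) * hessMatrix e F q).trace =
      -(graphDet e F q)⁻¹ *
        carreDuChamp e (graphInvMetric e F q) (dirDeriv u F) (graphDet e F) q := by
  have symm : partials e F q ⬝ᵥ hessMatrix e F q *ᵥ partials e (dirDeriv u F) q =
      partials e (dirDeriv u F) q ⬝ᵥ hessMatrix e F q *ᵥ partials e F q := by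
    rw [dotProduct_mulVec, ← mulVec_transpose, (hessMatrix_isSymm hF e).eq, dotProduct_comm]
  rw [trace_mul_comm, dirDeriv_graphInvMetric hF, carreDuChamp, graphInvMetric,
    dotProduct_invMetric_mulVec, partials_graphDet_eq_mulVec hF,
    dotProduct_comm (partials e (dirDeriv u F) q) (partials e F q)]
  simp only [Matrix.mul_sub, Matrix.mul_add, Matrix.mul_smul, trace_sub, trace_add, trace_smul,
    trace_mul_vecMulVec, dotProduct_smul, smul_eq_mul, symm, graphDet]
  ring

theorem heatOp_dirDeriv_of_flow (hF : ContDiffAt ℝ 3 F q)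
    (flow : ∀ᶠ z in 𝓝 q, heatOp τ e (graphInvMetric e F z) F z = 0) (u : X) :
    heatOp τ e (graphInvMetric e F q) (dirDeriv u F) q =
      -(graphDet e F q)⁻¹ *
        carreDuChamp e (graphInvMetric e F q) (dirDeriv u F) (graphDet e F) q := by
  have hF₂ : ContDiffAt ℝ 2 F q := hF.of_le (by norm_num)
  have hess_differentiable (i j : ι) : DifferentiableAt ℝ (fun z => hessMatrix e F z i j) q :=
    differentiableAt_partials (contDiffAt_dirDeriv hF (by norm_num) (e i)) e j
  have equation : dirDeriv τ F =ᶠ[𝓝 q]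
      fun z => (graphInvMetric e F z * hessMatrix e F z).trace :=
    flow.mono fun z hz => sub_eq_zero.1 hz
  rw [heatOp, dirDeriv_comm hF₂, dirDeriv_congr equation,
    dirDeriv_trace_mul (differentiableAt_graphInvMetric hF₂ e) hess_differentiable,
    trace_dirDeriv_graphInvMetric_mul_hessMatrix hF₂]
  simp only [dirDeriv_hessMatrix hF]
  exact add_sub_cancel_left _ _

theorem heatOp_graphDet_of_flow (hF : ContDiffAt ℝ 3 F q)
    (flow : ∀ᶠ z in 𝓝 q, heatOp τ e (graphInvMetric e F z) F z = 0) :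
    heatOp τ e (graphInvMetric e F q) (graphDet e F) q =
      -(graphDet e F q)⁻¹ *
          carreDuChamp e (graphInvMetric e F q) (graphDet e F) (graphDet e F) q
        - 2 * ∑ l,
          carreDuChamp e (graphInvMetric e F q) (dirDeriv (e l) F) (dirDeriv (e l) F) q := by
  have hF₂ : ContDiffAt ℝ 2 F q := hF.of_le (by norm_num)
  have hp (l : ι) : ContDiffAt ℝ 2 (dirDeriv (e l) F) q := contDiffAt_dirDeriv hF (by norm_num) _
  have carreDuChamp_graphDet (a : Matrix ι ι ℝ) (G : X → ℝ) :
      carreDuChamp e a (graphDet e F) G q =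
        2 * ∑ l, partials e F q l * carreDuChamp e a (dirDeriv (e l) F) G q := by
    simp only [carreDuChamp, partials_graphDet_eq_sum hF₂, smul_dotProduct, sum_dotProduct,
      smul_eq_mul]
  have expand : heatOp τ e (graphInvMetric e F q) (graphDet e F) q =
      ∑ l, heatOp τ e (graphInvMetric e F q)
        (fun z => dirDeriv (e l) F z * dirDeriv (e l) F z) q :=
    (heatOp_const_add _ _ q).trans (heatOp_sum fun l _ => (hp l).mul (hp l))
  rw [expand, carreDuChamp_graphDet, Finset.mul_sum, Finset.mul_sum, Finset.mul_sum,
    ← Finset.sum_sub_distrib]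
  refine Finset.sum_congr rfl fun l _ => ?_
  rw [heatOp_mul (graphInvMetric_isSymm e F q) (hp l) (hp l), heatOp_dirDeriv_of_flow hF flow]
  simp only [partials]
  ring

theorem heatOp_graphDet_le_of_flow (hF : ContDiffAt ℝ 3 F q)
    (flow : ∀ᶠ z in 𝓝 q, heatOp τ e (graphInvMetric e F z) F z = 0) :
    heatOp τ e (graphInvMetric e F q) (graphDet e F) q ≤
      -(3 / 2) * (graphDet e F q)⁻¹ *
        carreDuChamp e (graphInvMetric e F q) (graphDet e F) (graphDet e F) q := by
  have ha := posSemidef_graphInvMetric e F q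
  have hess_nonneg : 0 ≤ ∑ l,
      carreDuChamp e (graphInvMetric e F q) (dirDeriv (e l) F) (dirDeriv (e l) F) q :=
    Finset.sum_nonneg fun l _ => ha.dotProduct_mulVec_nonneg _
  have grad_le_hess := dotProduct_mulVec_sum_smul_le ha (partials e F q)
    fun l => partials e (dirDeriv (e l) F) q
  have p_sq_le : partials e F q ⬝ᵥ partials e F q ≤ graphDet e F q := by
    simp [graphDet, metricDet]
  have key := (inv_mul_le_iff₀ (graphDet_pos e F q)).2
    (grad_le_hess.trans (mul_le_mul_of_nonneg_right p_sq_le hess_nonneg))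
  rw [heatOp_graphDet_of_flow hF flow]
  simp only [carreDuChamp, partials_graphDet_eq_sum (hF.of_le (by norm_num)), mulVec_smul,
    smul_dotProduct, dotProduct_smul, smul_eq_mul]
  linarith

theorem dirDeriv_nonpos_of_isLocalMax_of_flow (hF : ContDiffAt ℝ 3 F q)
    (flow : ∀ᶠ z in 𝓝 q, heatOp τ e (graphInvMetric e F z) F z = 0)
    (hφ : ContDiffAt ℝ 2 φ q) (hφ₀ : φ q ≠ 0)
    (hφ_heat : heatOp τ e (graphInvMetric e F q) φ q = 0)
    (hmax : ∀ x : ι → ℝ, IsLocalMax (fun r : ℝ =>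
      (fun z => graphDet e F z * φ z ^ 2) (q + r • ∑ i, x i • e i)) 0) :
    dirDeriv τ (fun z => graphDet e F z * φ z ^ 2) q ≤ 0 := by
  set a := graphInvMetric e F q
  set V := graphDet e F
  have ha : a.IsSymm := graphInvMetric_isSymm e F q
  have : 0 < V q := graphDet_pos e F q
  have hV : ContDiffAt ℝ 2 V q := contDiffAt_graphDet hF (by norm_num) e
  have hφ₂ : ContDiffAt ℝ 2 (fun z => φ z ^ 2) q := hφ.pow 2
  have hV₁ := hV.differentiableAt two_ne_zero
  have hφ₁ := hφ.differentiableAt two_ne_zero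
  have heat_V : heatOp τ e a V q ≤ -(3 / 2) * (V q)⁻¹ * carreDuChamp e a V V q :=
    heatOp_graphDet_le_of_flow hF flow
  have critical : partials e V q = (-2 * V q / φ q) • partials e φ q :=
    partials_eq_smul_of_isLocalMax_mul_sq hV₁ hφ₁ hφ₀ hmax
  refine (dirDeriv_le_heatOp_of_isLocalMax (a := a) (posSemidef_graphInvMetric e F q)
    (hV.mul hφ₂) hmax).trans ?_
  rw [heatOp_mul ha hV hφ₂, heatOp_sq ha hφ, hφ_heat]
  simp only [carreDuChamp, partials_sq hφ₁, critical, mulVec_smul, smul_dotProduct, dotProduct_smul,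
    smul_eq_mul] at heat_V ⊢
  set Γ := partials e φ q ⬝ᵥ a *ᵥ partials e φ q
  have heat_term : φ q ^ 2 * heatOp τ e a V q ≤ -6 * (V q * Γ) := by
    refine (mul_le_mul_of_nonneg_left heat_V (sq_nonneg (φ q))).trans_eq ?_
    field_simp
    ring
  have cross_term : 2 * (-2 * V q / φ q * (2 * φ q * Γ)) = -8 * (V q * Γ) := by
    field_simp
    ring
  linarith

end GraphicalFlow

section ParabolicMaximumPrinciple

variable {E : Type*} [NormedAddCommGroup E] {K : Set (ℝ × E)} {W : ℝ × E → ℝ} {C : ℝ}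

theorem exists_isMaxOn_sub_time (hK : IsCompact K) (hW : ContinuousOn W K) {p₀ : ℝ × E}
    (hp₀ : p₀ ∈ K) (hC : C < W p₀) :
    ∃ δ > 0, ∃ p ∈ K, C < W p ∧ IsMaxOn (fun z => W z - δ * z.1) K p := by
  obtain ⟨a, ha⟩ := (hK.image continuous_fst).bddBelow
  have time_ge (z : ℝ × E) (hz : z ∈ K) : a ≤ z.1 := ha (mem_image_of_mem _ hz)
  obtain ⟨δ, δ_pos, hδ⟩ := exists_pos_mul_lt (sub_pos.2 hC) (p₀.1 - a)
  obtain ⟨p, hp, hmax⟩ := hK.exists_isMaxOn (f := fun z => W z - δ * z.1) ⟨p₀, hp₀⟩ (by fun_prop)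
  refine ⟨δ, δ_pos, p, hp, ?_, hmax⟩
  have := hmax hp₀
  simp only [mem_ofPred_eq] at this
  nlinarith [time_ge p hp]

variable [NormedSpace ℝ E]

theorem le_dirDeriv_of_isLocalMaxOn_sub_time {δ : ℝ} {p : ℝ × E} (hW : DifferentiableAt ℝ W p)
    (hmax : IsLocalMaxOn (fun z => W z - δ * z.1) {z | z.1 ≤ p.1} p) :
    δ ≤ dirDeriv (1, 0) W p := by
  have hasFDerivAt : HasFDerivAt (fun z : ℝ × E => W z - δ * z.1)
      (fderiv ℝ W p - δ • ContinuousLinearMap.fst ℝ ℝ E) p :=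
    hW.hasFDerivAt.sub (hasFDerivAt_fst.const_mul δ)
  have past : (-1, 0) ∈ posTangentConeAt {z : ℝ × E | z.1 ≤ p.1} p := by
    refine mem_posTangentConeAt_of_segment_subset
      ((convex_halfSpace_le (ContinuousLinearMap.fst ℝ ℝ E).isLinear _).segment_subset ?_ ?_) <;>
    simp
  have := hmax.hasFDerivWithinAt_nonpos hasFDerivAt.hasFDerivWithinAt past
  have neg_time : ((-1, 0) : ℝ × E) = -(1, 0) := by simp
  rw [neg_time, map_neg] at this
  simpa [dirDeriv] using this

theorem le_of_dirDeriv_time_nonpos (hK : IsCompact K) (hW : ContinuousOn W K)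
    (differentiableAt : ∀ p ∈ K, C < W p → DifferentiableAt ℝ W p)
    (mem_nhdsWithin_past : ∀ p ∈ K, C < W p → K ∈ 𝓝[{z | z.1 ≤ p.1}] p)
    (nonpos_of_isLocalMaxOn : ∀ p ∈ K, C < W p →
      IsLocalMaxOn W {z | z.1 = p.1} p → dirDeriv (1, 0) W p ≤ 0) :
    ∀ p ∈ K, W p ≤ C := by
  by_contra! ⟨p₀, hp₀, hC⟩
  obtain ⟨δ, δ_pos, p, hp, hCp, hmax⟩ := exists_isMaxOn_sub_time hK hW hp₀ hC
  have past_max : IsLocalMaxOn (fun z => W z - δ * z.1) {z | z.1 ≤ p.1} p :=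
    mem_of_superset (mem_nhdsWithin_past p hp hCp) hmax
  have slice_max : IsLocalMaxOn W {z | z.1 = p.1} p := by
    filter_upwards [past_max.filter_mono (nhdsWithin_mono p fun z => le_of_eq),
      self_mem_nhdsWithin] with z hz (hzp : z.1 = p.1)
    simpa [hzp] using hz
  exact (nonpos_of_isLocalMaxOn p hp hCp slice_max).not_gt
    (δ_pos.trans_le (le_dirDeriv_of_isLocalMaxOn_sub_time (differentiableAt p hp hCp) past_max))

end ParabolicMaximumPrinciple

section SpaceTime

variable {n : ℕ} {f : ℝ → EuclideanSpace ℝ (Fin n) → ℝ} {G : ℝ × EuclideanSpace ℝ (Fin n) → ℝ}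
  {I : Set ℝ} {U : Set (EuclideanSpace ℝ (Fin n))} {t : ℝ} {x : EuclideanSpace ℝ (Fin n)}
  {p : ℝ × EuclideanSpace ℝ (Fin n)}

/-- The coordinate directions of the spatial factor of space-time. -/
noncomputable def spatialDir (i : Fin n) : ℝ × EuclideanSpace ℝ (Fin n) :=
  (0, EuclideanSpace.single i 1)

theorem pd_eq_fderivWithin (hG : DifferentiableWithinAt ℝ G (I ×ˢ U) (t, x)) (ht : t ∈ I)
    (hU : U ∈ 𝓝 x) (i : Fin n) :
    pd (fun y => G (t, y)) x i = fderivWithin ℝ G (I ×ˢ U) (t, x) (spatialDir i) := by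
  have slice : HasFDerivWithinAt (fun y => G (t, y)) _ U x :=
    hG.hasFDerivWithinAt.comp x (hasFDerivAt_prodMk_right t x).hasFDerivWithinAt
      fun y hy => ⟨ht, hy⟩
  simp [pd, (slice.hasFDerivAt hU).fderiv, spatialDir]

theorem pd_eq_dirDeriv (hG : DifferentiableAt ℝ G (t, x)) (i : Fin n) :
    pd (fun y => G (t, y)) x i = dirDeriv (spatialDir i) G (t, x) := by
  have := pd_eq_fderivWithin (I := univ) (U := univ) hG.differentiableWithinAt trivial univ_mem i
  rwa [univ_prod_univ, fderivWithin_univ] at this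

theorem pd2_eq_dirDeriv (hf : ContDiffAt ℝ 2 (Function.uncurry f) (t, x)) (i j : Fin n) :
    pd2 (f t) x i j =
      dirDeriv (spatialDir i) (dirDeriv (spatialDir j) (Function.uncurry f)) (t, x) := by
  have hf₁ := (contDiffAt_dirDeriv (m := 1) hf (by norm_num) (spatialDir j)).differentiableAt
    one_ne_zero
  have slice : Tendsto (fun y => (t, y)) (𝓝 x) (𝓝 (t, x)) := Continuous.tendsto (by fun_prop) x
  have first_order : (fun y => pd (f t) y j) =ᶠ[𝓝 x]
      fun y => dirDeriv (spatialDir j) (Function.uncurry f) (t, y) := by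
    filter_upwards [slice.eventually (eventually_differentiableAt hf two_ne_zero)] with y hy
      using pd_eq_dirDeriv hy j
  rw [pd2, first_order.fderiv_eq, ← pd_eq_dirDeriv hf₁, pd]

theorem deriv_time_eq_dirDeriv (hG : DifferentiableAt ℝ G (t, x)) :
    deriv (fun s => G (s, x)) t = dirDeriv (1, 0) G (t, x) := by
  have slice : HasFDerivAt (fun s => G (s, x)) _ t :=
    hG.hasFDerivAt.comp t (hasFDerivAt_prodMk_left t x)
  simp [slice.hasDerivAt.deriv, dirDeriv]

theorem one_add_gradNormSq_eq_graphDet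
    (hf : DifferentiableAt ℝ (Function.uncurry f) (t, x)) :
    1 + gradNormSq (f t) x = graphDet spatialDir (Function.uncurry f) (t, x) := by
  simp only [gradNormSq, graphDet, metricDet, dotProduct, partials, ← pd_eq_dirDeriv hf, sq]
  rfl

theorem mcfRHS_eq_trace (hf : ContDiffAt ℝ 2 (Function.uncurry f) (t, x)) :
    mcfRHS (f t) x = (graphInvMetric spatialDir (Function.uncurry f) (t, x) *
      hessMatrix spatialDir (Function.uncurry f) (t, x)).trace := by
  have hf₁ := hf.differentiableAt two_ne_zero
  have hp (i : Fin n) : pd (f t) x i = partials spatialDir (Function.uncurry f) (t, x) i :=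
    pd_eq_dirDeriv hf₁ i
  simp only [mcfRHS, trace, diag_apply, mul_apply, pd2_eq_dirDeriv hf,
    one_add_gradNormSq_eq_graphDet hf₁, hp, graphInvMetric, invMetric, Matrix.sub_apply,
    Matrix.smul_apply, vecMulVec_apply, one_apply, smul_eq_mul, div_eq_inv_mul]
  rfl

theorem IsGMCF.contDiffAt (hf : IsGMCF I U f) (hp : I ×ˢ U ∈ 𝓝 p) (m : ℕ) :
    ContDiffAt ℝ m (Function.uncurry f) p :=
  (ContDiffOn.contDiffAt hf.1 hp).of_le (by norm_cast; exact le_top)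

theorem IsGMCF.heatOp_eq_zero (hf : IsGMCF I U f) (hp : I ×ˢ U ∈ 𝓝 p) :
    heatOp (1, 0) spatialDir (graphInvMetric spatialDir (Function.uncurry f) p)
      (Function.uncurry f) p = 0 := by
  have hf₂ : ContDiffAt ℝ 2 (Function.uncurry f) p := hf.contDiffAt hp 2
  have ⟨ht, hx⟩ := mem_of_mem_nhds hp
  rw [heatOp, ← mcfRHS_eq_trace hf₂, ← hf.2 p.1 ht p.2 hx, sub_eq_zero]
  exact (deriv_time_eq_dirDeriv (hf₂.differentiableAt two_ne_zero)).symm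

theorem IsGMCF.continuousOn_gradNormSq (hf : IsGMCF I U f) (hI : UniqueDiffOn ℝ I)
    (hU : IsOpen U) :
    ContinuousOn (fun p : ℝ × EuclideanSpace ℝ (Fin n) => gradNormSq (f p.1) p.2) (I ×ˢ U) := by
  have hf₁ : ContDiffOn ℝ 1 (Function.uncurry f) (I ×ˢ U) := hf.1.of_le (by norm_cast)
  have continuousOn_fderivWithin := hf₁.continuousOn_fderivWithin
    (hI.prod hU.uniqueDiffOn) le_rfl
  refine continuousOn_finsetSum _ fun i _ => (ContinuousOn.congr (f := fun p =>
    fderivWithin ℝ (Function.uncurry f) (I ×ˢ U) p (spatialDir i)) (by fun_prop)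
    fun p hp => ?_).pow 2
  exact pd_eq_fderivWithin (hf₁.differentiableOn one_ne_zero p hp) hp.1 (hU.mem_nhds hp.2) i

end SpaceTime

section Cutoff

variable {n : ℕ} {f : ℝ → EuclideanSpace ℝ (Fin n) → ℝ} {t₁ R c : ℝ}
  {x₀ : EuclideanSpace ℝ (Fin n)} {p : ℝ × EuclideanSpace ℝ (Fin n)}

/-- The shrinking-sphere function `|x - x₀|² + (f(t,x) - c)² + 2n(t - t₁)`: on the graph of `f` it
is the squared distance to `(x₀, c)`, corrected so as to solve the heat equation on the flow. -/
noncomputable def shrinkingDistSq (f : ℝ → EuclideanSpace ℝ (Fin n) → ℝ) (t₁ c : ℝ)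
    (x₀ : EuclideanSpace ℝ (Fin n)) (p : ℝ × EuclideanSpace ℝ (Fin n)) : ℝ :=
  dist p.2 x₀ ^ 2 + (f p.1 p.2 - c) ^ 2 + 2 * n * (p.1 - t₁)

theorem heatOp_time (C : ℝ) (a : Matrix (Fin n) (Fin n) ℝ) :
    heatOp (1, 0) spatialDir a (fun z => C * (z.1 - t₁)) p = C := by
  have : heatOp (1, 0) spatialDir a (fun z => C * z.1) p = _ :=
    heatOp_continuousLinearMap (C • ContinuousLinearMap.fst ℝ ℝ _) p
  simpa [mul_sub, heatOp_sub_const] using this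

theorem heatOp_coord (a : Matrix (Fin n) (Fin n) ℝ) (i : Fin n) :
    heatOp (1, 0) spatialDir a (fun z => z.2 i) p = 0 :=
  (heatOp_continuousLinearMap ((EuclideanSpace.proj i).comp (.snd ℝ ℝ _)) p).trans (by simp)

theorem partials_coord (i : Fin n) :
    partials spatialDir (fun z => z.2 i) p = Pi.single i 1 := by
  have : HasFDerivAt (fun z : ℝ × EuclideanSpace ℝ (Fin n) => z.2 i) _ p :=
    ((EuclideanSpace.proj i).comp (ContinuousLinearMap.snd ℝ ℝ _)).hasFDerivAt
  ext j
  simp [partials, dirDeriv, this.fderiv, spatialDir, Pi.single_apply, eq_comm]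

theorem heatOp_dist_sq {a : Matrix (Fin n) (Fin n) ℝ} (ha : a.IsSymm) :
    heatOp (1, 0) spatialDir a (fun z => dist z.2 x₀ ^ 2) p = -2 * a.trace := by
  have smooth (i : Fin n) :
      ContDiffAt ℝ 2 (fun z : ℝ × EuclideanSpace ℝ (Fin n) => z.2 i - x₀ i) p := by
    fun_prop
  simp only [EuclideanSpace.dist_sq_eq, Real.dist_eq, sq_abs]
  rw [heatOp_sum fun i _ => (smooth i).pow 2, trace, Finset.mul_sum]
  refine Finset.sum_congr rfl fun i _ => ?_
  simp [heatOp_sq ha (smooth i), heatOp_sub_const, heatOp_coord, carreDuChamp,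
    partials_sub_const, partials_coord]

theorem contDiffAt_dist_sq {m : WithTop ℕ∞} :
    ContDiffAt ℝ m (fun z : ℝ × EuclideanSpace ℝ (Fin n) => dist z.2 x₀ ^ 2) p := by
  simp only [dist_eq_norm]
  exact ((contDiff_snd.sub contDiff_const).norm_sq ℝ).contDiffAt

theorem contDiffAt_shrinkingDistSq {m : WithTop ℕ∞}
    (hf : ContDiffAt ℝ m (Function.uncurry f) p) :
    ContDiffAt ℝ m (shrinkingDistSq f t₁ c x₀) p :=
  (contDiffAt_dist_sq.add ((hf.sub contDiffAt_const).pow 2)).add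
    (contDiffAt_const.mul (contDiffAt_fst.sub contDiffAt_const))

theorem heatOp_shrinkingDistSq (hf : ContDiffAt ℝ 2 (Function.uncurry f) p)
    (flow : heatOp (1, 0) spatialDir (graphInvMetric spatialDir (Function.uncurry f) p)
      (Function.uncurry f) p = 0) :
    heatOp (1, 0) spatialDir (graphInvMetric spatialDir (Function.uncurry f) p)
      (shrinkingDistSq f t₁ c x₀) p = 0 := by
  have ha := graphInvMetric_isSymm spatialDir (Function.uncurry f) p
  have height : ContDiffAt ℝ 2 (fun z => Function.uncurry f z - c) p := hf.sub contDiffAt_const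
  have time : ContDiffAt ℝ 2
      (fun z : ℝ × EuclideanSpace ℝ (Fin n) => 2 * (n : ℝ) * (z.1 - t₁)) p := by
    fun_prop
  change heatOp _ _ _ (fun z => dist z.2 x₀ ^ 2 + (Function.uncurry f z - c) ^ 2
    + 2 * n * (z.1 - t₁)) p = 0
  rw [heatOp_add (contDiffAt_dist_sq.add (height.pow 2)) time,
    heatOp_add contDiffAt_dist_sq (height.pow 2), heatOp_dist_sq ha, heatOp_sq ha height,
    heatOp_sub_const, flow, carreDuChamp, partials_sub_const, heatOp_time]
  have := trace_invMetric_add (partials spatialDir (Function.uncurry f) p)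
  rw [Fintype.card_fin, ← graphInvMetric] at this
  linarith

end Cutoff

section LocalizedFlow

variable {n : ℕ} {f : ℝ → EuclideanSpace ℝ (Fin n) → ℝ} {I : Set ℝ}
  {U : Set (EuclideanSpace ℝ (Fin n))} {t₁ t₂ t ρ R M c : ℝ} {x₀ : EuclideanSpace ℝ (Fin n)}
  {p : ℝ × EuclideanSpace ℝ (Fin n)}

/-- The localised squared area element `(1 + |Df|²) (R - shrinkingDistSq)²`. -/
noncomputable def cutoffAreaSq (f : ℝ → EuclideanSpace ℝ (Fin n) → ℝ) (t₁ c : ℝ)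
    (x₀ : EuclideanSpace ℝ (Fin n)) (R : ℝ) (p : ℝ × EuclideanSpace ℝ (Fin n)) : ℝ :=
  (1 + gradNormSq (f p.1) p.2) * (R - shrinkingDistSq f t₁ c x₀ p) ^ 2

/-- The points over `Bⁿ(x₀,ρ)` at times in `[t₁,t]` lying inside the shrinking sphere that starts
from radius `√R`. -/
def shrinkingBall (f : ℝ → EuclideanSpace ℝ (Fin n) → ℝ) (t₁ c : ℝ)
    (x₀ : EuclideanSpace ℝ (Fin n)) (ρ R t : ℝ) : Set (ℝ × EuclideanSpace ℝ (Fin n)) :=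
  {p ∈ Icc t₁ t ×ˢ ball x₀ ρ | shrinkingDistSq f t₁ c x₀ p ≤ R}

theorem cutoffAreaSq_eventuallyEq (hf : IsGMCF I U f) (hp : I ×ˢ U ∈ 𝓝 p) :
    cutoffAreaSq f t₁ c x₀ R =ᶠ[𝓝 p] fun z =>
      graphDet spatialDir (Function.uncurry f) z *
        (R - shrinkingDistSq f t₁ c x₀ z) ^ 2 := by
  filter_upwards [eventually_mem_nhds_iff.2 hp] with z hz
  rw [cutoffAreaSq, ← one_add_gradNormSq_eq_graphDet]
  exact (hf.contDiffAt hz 1).differentiableAt one_ne_zero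

theorem differentiableAt_cutoffAreaSq (hf : IsGMCF I U f) (hp : I ×ˢ U ∈ 𝓝 p) :
    DifferentiableAt ℝ (cutoffAreaSq f t₁ c x₀ R) p := by
  have hV := contDiffAt_graphDet (m := 1) (hf.contDiffAt hp 2) (by norm_num) spatialDir
  have hψ : ContDiffAt ℝ 1 (shrinkingDistSq f t₁ c x₀) p :=
    contDiffAt_shrinkingDistSq (hf.contDiffAt hp 1)
  have hW := (hV.mul (((contDiffAt_const (c := R)).sub hψ).pow 2)).differentiableAt one_ne_zero
  exact hW.congr_of_eventuallyEq (cutoffAreaSq_eventuallyEq hf hp)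

theorem isLocalMax_line_of_isLocalMaxOn_slice {W : ℝ × EuclideanSpace ℝ (Fin n) → ℝ}
    (hmax : IsLocalMaxOn W {z | z.1 = p.1} p) (x : Fin n → ℝ) :
    IsLocalMax (fun r : ℝ => W (p + r • ∑ i, x i • spatialDir i)) 0 := by
  have line : Tendsto (fun r : ℝ => p + r • ∑ i, x i • spatialDir i) (𝓝 0)
      (𝓝[{z | z.1 = p.1}] p) := by
    refine tendsto_nhdsWithin_iff.2 ⟨Continuous.tendsto' (by fun_prop) _ _ (by simp),
      .of_forall fun r => ?_⟩
    simp [spatialDir, Prod.fst_sum]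
  simpa [IsLocalMax, IsMaxFilter] using line.eventually hmax

theorem dirDeriv_cutoffAreaSq_nonpos (hf : IsGMCF I U f) (hp : I ×ˢ U ∈ 𝓝 p)
    (hψ : shrinkingDistSq f t₁ c x₀ p < R)
    (hmax : IsLocalMaxOn (cutoffAreaSq f t₁ c x₀ R) {z | z.1 = p.1} p) :
    dirDeriv (1, 0) (cutoffAreaSq f t₁ c x₀ R) p ≤ 0 := by
  have hf₂ : ContDiffAt ℝ 2 (Function.uncurry f) p := hf.contDiffAt hp 2
  have hW := cutoffAreaSq_eventuallyEq (t₁ := t₁) (c := c) (x₀ := x₀) (R := R) hf hp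
  have flow : ∀ᶠ z in 𝓝 p, heatOp (1, 0) spatialDir
      (graphInvMetric spatialDir (Function.uncurry f) z) (Function.uncurry f) z = 0 := by
    filter_upwards [eventually_mem_nhds_iff.2 hp] with z hz using hf.heatOp_eq_zero hz
  rw [dirDeriv_congr hW]
  refine dirDeriv_nonpos_of_isLocalMax_of_flow (hf.contDiffAt hp 3) flow
    (contDiffAt_const.sub (contDiffAt_shrinkingDistSq hf₂)) (sub_pos.2 hψ).ne' ?_
    (isLocalMax_line_of_isLocalMaxOn_slice
      (hmax.congr (hW.filter_mono nhdsWithin_le_nhds) rfl))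
  rw [heatOp_const_sub, heatOp_shrinkingDistSq hf₂ flow.self_of_nhds, neg_zero]

theorem dist_sq_le_shrinkingDistSq (hp : t₁ ≤ p.1) :
    dist p.2 x₀ ^ 2 ≤ shrinkingDistSq f t₁ c x₀ p := by
  have := sub_nonneg.2 hp
  rw [shrinkingDistSq, add_assoc]
  exact le_add_of_nonneg_right (by positivity)

theorem shrinkingDistSq_nonneg (hp : t₁ ≤ p.1) : 0 ≤ shrinkingDistSq f t₁ c x₀ p :=
  (sq_nonneg _).trans (dist_sq_le_shrinkingDistSq hp)

theorem continuousOn_shrinkingDistSq {S : Set (ℝ × EuclideanSpace ℝ (Fin n))}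
    (hf : ContinuousOn (Function.uncurry f) S) :
    ContinuousOn (shrinkingDistSq f t₁ c x₀) S :=
  (ContinuousOn.add (by fun_prop) ((hf.sub continuousOn_const).pow 2)).add (by fun_prop)

theorem isCompact_shrinkingBall (hf : ContinuousOn (Function.uncurry f) (Icc t₁ t ×ˢ ball x₀ ρ))
    (hρ : 0 < ρ) (hR : R < ρ ^ 2) : IsCompact (shrinkingBall f t₁ c x₀ ρ R t) := by
  have cylinder_subset : Icc t₁ t ×ˢ closedBall x₀ √R ⊆ Icc t₁ t ×ˢ ball x₀ ρ :=
    prod_mono_right (closedBall_subset_ball ((Real.sqrt_lt' hρ).2 hR))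
  have eq_preimage : shrinkingBall f t₁ c x₀ ρ R t =
      (Icc t₁ t ×ˢ closedBall x₀ √R) ∩ shrinkingDistSq f t₁ c x₀ ⁻¹' Iic R := by
    refine Subset.antisymm (fun p hp => ⟨⟨hp.1.1, ?_⟩, hp.2⟩) fun p hp =>
      ⟨cylinder_subset hp.1, hp.2⟩
    exact Real.le_sqrt_of_sq_le ((dist_sq_le_shrinkingDistSq hp.1.1.1).trans hp.2)
  have hK : IsCompact (Icc t₁ t ×ˢ closedBall x₀ √R) :=
    isCompact_Icc.prod (isCompact_closedBall _ _)
  rw [eq_preimage]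
  exact hK.of_isClosed_subset ((continuousOn_shrinkingDistSq
    (hf.mono cylinder_subset)).preimage_isClosed_of_isClosed hK.isClosed isClosed_Iic)
    inter_subset_left

theorem shrinkingBall_mem_nhdsWithin_past (hp : p ∈ shrinkingBall f t₁ c x₀ ρ R t)
    (ht : t₁ < p.1) (hψ : shrinkingDistSq f t₁ c x₀ p < R)
    (hc : ContinuousAt (shrinkingDistSq f t₁ c x₀) p) :
    shrinkingBall f t₁ c x₀ ρ R t ∈ 𝓝[{z | z.1 ≤ p.1}] p := by
  filter_upwards [self_mem_nhdsWithin, mem_nhdsWithin_of_mem_nhds (hc.eventually_lt_const hψ),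
    mem_nhdsWithin_of_mem_nhds (continuousAt_fst.eventually_const_lt ht),
    mem_nhdsWithin_of_mem_nhds (continuousAt_snd.eventually_mem (isOpen_ball.mem_nhds hp.1.2))]
    with z past inside future ball
  exact ⟨⟨⟨future.le, past.trans hp.1.1.2⟩, ball⟩, inside.le⟩

theorem lt_of_lt_cutoffAreaSq (initial : ∀ y ∈ ball x₀ ρ, √(1 + gradNormSq (f t₁) y) ≤ M)
    (hp : p ∈ shrinkingBall f t₁ c x₀ ρ R t)
    (hW : M ^ 2 * R ^ 2 < cutoffAreaSq f t₁ c x₀ R p) :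
    t₁ < p.1 ∧ shrinkingDistSq f t₁ c x₀ p < R := by
  constructor
  · refine hp.1.1.1.lt_of_ne fun h => hW.not_ge ?_
    have slope_le : 1 + gradNormSq (f p.1) p.2 ≤ M ^ 2 :=
      h ▸ (Real.sqrt_le_iff.1 (initial p.2 hp.1.2)).2
    have cutoff_le : (R - shrinkingDistSq f t₁ c x₀ p) ^ 2 ≤ R ^ 2 :=
      pow_le_pow_left₀ (sub_nonneg.2 hp.2) (sub_le_self _ (shrinkingDistSq_nonneg hp.1.1.1)) 2
    exact mul_le_mul slope_le cutoff_le (sq_nonneg _) (sq_nonneg _)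
  · refine hp.2.lt_of_ne fun h => hW.not_ge ?_
    rw [cutoffAreaSq, h, sub_self, zero_pow two_ne_zero, mul_zero]
    positivity

theorem IsGMCF.cutoffAreaSq_le (hf : IsGMCF (Ico t₁ t₂) (ball x₀ ρ) f) (ht : t < t₂)
    (hρ : 0 < ρ) (hR : R < ρ ^ 2)
    (initial : ∀ y ∈ ball x₀ ρ, √(1 + gradNormSq (f t₁) y) ≤ M) :
    ∀ p ∈ shrinkingBall f t₁ c x₀ ρ R t, cutoffAreaSq f t₁ c x₀ R p ≤ M ^ 2 * R ^ 2 := by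
  have cylinder_subset : Icc t₁ t ×ˢ ball x₀ ρ ⊆ Ico t₁ t₂ ×ˢ ball x₀ ρ :=
    prod_mono_left (Icc_subset_Ico_right ht)
  have hf_cont : ContinuousOn (Function.uncurry f) (Icc t₁ t ×ˢ ball x₀ ρ) :=
    ContinuousOn.mono hf.1.continuousOn cylinder_subset
  have subset : shrinkingBall f t₁ c x₀ ρ R t ⊆ Icc t₁ t ×ˢ ball x₀ ρ := sep_subset _ _
  have area_cont : ContinuousOn (cutoffAreaSq f t₁ c x₀ R) (shrinkingBall f t₁ c x₀ ρ R t) :=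
    (continuousOn_const.add ((hf.continuousOn_gradNormSq (uniqueDiffOn_Ico t₁ t₂) isOpen_ball).mono
      (subset.trans cylinder_subset))).mul
    ((continuousOn_const.sub (continuousOn_shrinkingDistSq (hf_cont.mono subset))).pow 2)
  have nhds (p) (hp : p ∈ shrinkingBall f t₁ c x₀ ρ R t)
      (hW : M ^ 2 * R ^ 2 < cutoffAreaSq f t₁ c x₀ R p) : Ico t₁ t₂ ×ˢ ball x₀ ρ ∈ 𝓝 p :=
    prod_mem_nhds (Ico_mem_nhds (lt_of_lt_cutoffAreaSq initial hp hW).1 (hp.1.1.2.trans_lt ht))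
      (isOpen_ball.mem_nhds hp.1.2)
  refine le_of_dirDeriv_time_nonpos (isCompact_shrinkingBall hf_cont hρ hR) area_cont
    (fun p hp hW => differentiableAt_cutoffAreaSq hf (nhds p hp hW)) (fun p hp hW => ?_)
    fun p hp hW => dirDeriv_cutoffAreaSq_nonpos hf (nhds p hp hW)
      (lt_of_lt_cutoffAreaSq initial hp hW).2
  obtain ⟨after, inside⟩ := lt_of_lt_cutoffAreaSq initial hp hW
  exact shrinkingBall_mem_nhdsWithin_past hp after inside
    (contDiffAt_shrinkingDistSq (hf.contDiffAt (nhds p hp hW) 0)).continuousAt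

theorem IsGMCF.sqrt_mul_sub_shrinkingDistSq_le {x : EuclideanSpace ℝ (Fin n)}
    (hf : IsGMCF (Ico t₁ t₂) (ball x₀ ρ) f) (ht : t ∈ Ico t₁ t₂) (hx : x ∈ ball x₀ ρ)
    (hxR : shrinkingDistSq f t₁ c x₀ (t, x) ≤ R) (hR : R < ρ ^ 2)
    (initial : ∀ y ∈ ball x₀ ρ, √(1 + gradNormSq (f t₁) y) ≤ M) :
    √(1 + gradNormSq (f t) x) * (R - shrinkingDistSq f t₁ c x₀ (t, x)) ≤ M * R := by
  have hρ : 0 < ρ := pos_of_mem_ball hx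
  have hM : 0 ≤ M := (Real.sqrt_nonneg _).trans (initial x₀ (mem_ball_self hρ))
  have hR₀ : 0 ≤ R := (shrinkingDistSq_nonneg ht.1).trans hxR
  have slope_nonneg : 0 ≤ 1 + gradNormSq (f t) x := by
    rw [gradNormSq]
    positivity
  refine (sq_le_sq₀ (mul_nonneg (Real.sqrt_nonneg _) (sub_nonneg.2 hxR))
    (mul_nonneg hM hR₀)).1 ?_
  rw [mul_pow, mul_pow, Real.sq_sqrt slope_nonneg]
  exact hf.cutoffAreaSq_le ht.2 hρ hR initial (t, x) ⟨⟨⟨ht.1, le_rfl⟩, hx⟩, hxR⟩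

end LocalizedFlow

/-- **Ecker–Huisken local gradient estimate** (graphical form).
For a graphical mean curvature flow on `[t₁,t₂) × Bⁿ(x̂₀,ρ)`, with
`v(t,x) := √(1+|Df(t,x)|²)`, one has for every `c`, every `t ∈ [t₁,t₂)` and every
`x ∈ Bⁿ(x̂₀,ρ)` with `|x−x̂₀|² + (f(t,x)−c)² + 2n(t−t₁) < ρ²` the estimate
`v(t,x)·(1 − ρ⁻²(|x−x̂₀|² + (f(t,x)−c)² + 2n(t−t₁))) ≤ sup_{Bⁿ(x̂₀,ρ)} v(t₁,·)`,
the supremum being expressed via upper bounds `M`. -/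
theorem localgradthm (n : ℕ) (hn : 1 ≤ n) (ρ : ℝ) (hρ : 0 < ρ) (t₁ t₂ : ℝ) (ht : t₁ < t₂)
    (x₀ : EuclideanSpace ℝ (Fin n)) (f : ℝ → EuclideanSpace ℝ (Fin n) → ℝ)
    (hf : IsGMCF (Set.Ico t₁ t₂) (Metric.ball x₀ ρ) f) :
    ∀ c : ℝ, ∀ t ∈ Set.Ico t₁ t₂, ∀ x ∈ Metric.ball x₀ ρ,
      dist x x₀ ^ 2 + (f t x - c) ^ 2 + 2 * n * (t - t₁) < ρ ^ 2 →
      ∀ M : ℝ, (∀ y ∈ Metric.ball x₀ ρ, Real.sqrt (1 + gradNormSq (f t₁) y) ≤ M) →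
        Real.sqrt (1 + gradNormSq (f t) x) *
            (1 - (ρ ^ 2)⁻¹ * (dist x x₀ ^ 2 + (f t x - c) ^ 2 + 2 * n * (t - t₁))) ≤ M := by
  intro c t ht' x hx hinside M initial
  set v := √(1 + gradNormSq (f t) x)
  set u := dist x x₀ ^ 2 + (f t x - c) ^ 2 + 2 * n * (t - t₁)
  have estimate : ∀ᶠ R in 𝓝[<] (ρ ^ 2), v * (R - u) ≤ M * R := by
    filter_upwards [Ioo_mem_nhdsLT hinside] with R hR
    exact hf.sqrt_mul_sub_shrinkingDistSq_le ht' hx hR.1.le hR.2 initial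
  have lhs : ContinuousWithinAt (fun R => v * (R - u)) (Iio (ρ ^ 2)) (ρ ^ 2) := by fun_prop
  have rhs : ContinuousWithinAt (fun R => M * R) (Iio (ρ ^ 2)) (ρ ^ 2) := by fun_prop
  have limit : v * (ρ ^ 2 - u) ≤ M * ρ ^ 2 := le_of_tendsto_of_tendsto lhs rhs estimate
  calc v * (1 - (ρ ^ 2)⁻¹ * u) = v * (ρ ^ 2 - u) / ρ ^ 2 := by field_simp
    _ ≤ M := (div_le_iff₀ (by positivity)).2 limit
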